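/- There exists a finite straight-line unit-distance graph (V,E) in the plane with exactly 38 unit triangles whose interiors are pairwise disjoint, in which every edge is contained in a unit triangle, there are no additional triangles, every vertex has degree 2 or degree 4, and there are two distinct lines g₁ and g₂ through a common point, meeting at angle 2π/100 = 3.6°, such that every vertex of degree 2 lies on g₁ ∪ g₂ and the rotation by 2π/100 about the intersection point of g₁ and g₂ maps the set of degree-2 vertices lying on g₁ bijectively onto the set of degree-2 vertices lying on g₂. -/

import Mathlib

/-!
Straight-line unit-distance graphs in the Euclidean plane, modelled as ℂ.
-/

noncomputable section
open scoped Classical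

/-- A finite straight-line unit-distance graph in the plane: a finite vertex
set `V ⊆ ℂ` and a finite set `E` of 2-element subsets of `V` (edges), each of
whose two endpoints are at distance one. -/
structure UnitDistGraph where
  V : Finset ℂ
  E : Finset (Finset ℂ)
  edge_sub : ∀ e ∈ E, e ⊆ V
  edge_pair : ∀ e ∈ E, ∃ x y : ℂ, x ≠ y ∧ e = {x, y} ∧ dist x y = 1

namespace UnitDistGraph

/-- The closed segment drawn for an edge (the convex hull of its two endpoints). -/
def edgeSeg (e : Finset ℂ) : Set ℂ := convexHull ℝ (e : Set ℂ)

/-- The degree of a vertex: the number of edges containing it. -/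
def degree (G : UnitDistGraph) (v : ℂ) : ℕ := {e | e ∈ G.E ∧ v ∈ e}.ncard

/-- The graph is drawn planarly: two distinct closed edge segments intersect in
at most a common endpoint, and no vertex lies in the relative interior of an
edge (i.e. a vertex on a closed edge segment is an endpoint of that edge). -/
def Planar (G : UnitDistGraph) : Prop :=
  (∀ e ∈ G.E, ∀ f ∈ G.E, e ≠ f →
    edgeSeg e ∩ edgeSeg f ⊆ (e : Set ℂ) ∩ (f : Set ℂ)) ∧
  (∀ v ∈ G.V, ∀ e ∈ G.E, v ∈ edgeSeg e → v ∈ e)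

/-- The graph is 4-regular: every vertex belongs to exactly 4 edges. -/
def Regular4 (G : UnitDistGraph) : Prop := ∀ v ∈ G.V, G.degree v = 4

/-- A unit triangle: a 3-element subset of `V` all of whose pairs are edges. -/
def IsUnitTriangle (G : UnitDistGraph) (t : Finset ℂ) : Prop :=
  t ⊆ G.V ∧ t.card = 3 ∧ ∀ x ∈ t, ∀ y ∈ t, x ≠ y → ({x, y} : Finset ℂ) ∈ G.E

/-- The number of unit triangles of the graph. -/
def triangleCount (G : UnitDistGraph) : ℕ := {t : Finset ℂ | G.IsUnitTriangle t}.ncard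

/-- The graph consists only of unit triangles: every edge lies in a unit triangle. -/
def OnlyUnitTriangles (G : UnitDistGraph) : Prop :=
  ∀ e ∈ G.E, ∃ t : Finset ℂ, G.IsUnitTriangle t ∧ e ⊆ t

/-- The closed segment from `x` to `y` is a union of closed edge segments of `E`. -/
def SideCovered (G : UnitDistGraph) (x y : ℂ) : Prop :=
  ∃ S : Finset (Finset ℂ), S ⊆ G.E ∧ segment ℝ x y = ⋃ e ∈ S, edgeSeg e

/-- No additional triangles: any equilateral triangle on vertices of `V` each of
whose sides is a union of closed edge segments has side length 1. -/
def NoAdditionalTriangles (G : UnitDistGraph) : Prop :=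
  ∀ x ∈ G.V, ∀ y ∈ G.V, ∀ z ∈ G.V, x ≠ y → y ≠ z → x ≠ z →
    dist x y = dist y z → dist y z = dist z x →
    G.SideCovered x y → G.SideCovered y z → G.SideCovered z x →
    dist x y = 1

end UnitDistGraph

open UnitDistGraph

namespace UnitDistGraph

/-- Rotation of the plane about the center `c` by the angle `θ`. -/
def rot (c : ℂ) (θ : ℝ) (z : ℂ) : ℂ := c + Complex.exp (θ * Complex.I) * (z - c)

/-- The graph is invariant under the rotation about `c` by `θ`: this rotation
maps the vertex set onto itself and the edge set onto itself. -/
def RotInvariant (G : UnitDistGraph) (c : ℂ) (θ : ℝ) : Prop :=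
  (rot c θ) '' (G.V : Set ℂ) = (G.V : Set ℂ) ∧
  (Finset.image (rot c θ)) '' (G.E : Set (Finset ℂ)) = (G.E : Set (Finset ℂ))

/-- The unit triangles of the graph are non-overlapping: the interiors of the
closed triangular regions of two distinct unit triangles are disjoint. -/
def NonOverlapping (G : UnitDistGraph) : Prop :=
  ∀ t₁ t₂ : Finset ℂ, G.IsUnitTriangle t₁ → G.IsUnitTriangle t₂ → t₁ ≠ t₂ →
    interior (convexHull ℝ (t₁ : Set ℂ)) ∩ interior (convexHull ℝ (t₂ : Set ℂ)) = ∅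

/-- The line through the point `c` with direction `d`. -/
def line (c d : ℂ) : Set ℂ := {z : ℂ | ∃ t : ℝ, z = c + (t : ℂ) * d}

/-- Two unit-distance graphs are congruent if some isometry of the plane maps
the vertex set and edge set of one onto those of the other. -/
def Congruent (G₁ G₂ : UnitDistGraph) : Prop :=
  ∃ φ : ℂ ≃ᵢ ℂ, G₁.V.image φ = G₂.V ∧ G₁.E.image (Finset.image φ) = G₂.E

end UnitDistGraph

namespace HarborthG1

/-! ### Separation of convex hulls -/

lemma hull_le {A : Finset ℂ} {α β r : ℝ} (h : ∀ v ∈ A, α * v.re + β * v.im ≤ r)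
    {z : ℂ} (hz : z ∈ convexHull ℝ (A : Set ℂ)) : α * z.re + β * z.im ≤ r := by
  have hc : Convex ℝ {z : ℂ | α * z.re + β * z.im ≤ r} := by
    apply convex_halfSpace_le (f := fun z : ℂ => α * z.re + β * z.im)
    constructor
    · intro x y; simp; ring
    · intro c x; simp; ring
  exact (convexHull_min (s := (A : Set ℂ)) (fun v hv => h v hv) hc) hz

/-- Weak separation by a line. -/
def Sep (A B : Finset ℂ) : Prop :=
  ∃ α β r : ℝ, 0 < α ^ 2 + β ^ 2 ∧ (∀ v ∈ A, α * v.re + β * v.im ≤ r) ∧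
    (∀ v ∈ B, r ≤ α * v.re + β * v.im)

/-- Strict separation by a line. -/
def SSep (A B : Finset ℂ) : Prop :=
  ∃ α β r : ℝ, (∀ v ∈ A, α * v.re + β * v.im < r) ∧
    (∀ v ∈ B, r < α * v.re + β * v.im)

lemma Sep.symm {A B : Finset ℂ} (h : Sep A B) : Sep B A := by
  obtain ⟨α, β, r, h0, h1, h2⟩ := h
  refine ⟨-α, -β, -r, by simpa using h0, fun v hv => ?_, fun v hv => ?_⟩
  · have := h2 v hv; linarith
  · have := h1 v hv; linarith

lemma SSep.symm {A B : Finset ℂ} (h : SSep A B) : SSep B A := by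
  obtain ⟨α, β, r, h1, h2⟩ := h
  refine ⟨-α, -β, -r, fun v hv => ?_, fun v hv => ?_⟩
  · have := h2 v hv; linarith
  · have := h1 v hv; linarith

lemma Sep.disj {A B : Finset ℂ} (h : Sep A B) :
    interior (convexHull ℝ (A : Set ℂ)) ∩ interior (convexHull ℝ (B : Set ℂ)) = ∅ := by
  obtain ⟨α, β, r, h0, h1, h2⟩ := h
  rw [Set.eq_empty_iff_forall_notMem]
  intro z hz
  have hB : ∀ v ∈ B, (-α) * v.re + (-β) * v.im ≤ -r := fun v hv => by
    have := h2 v hv; linarith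
  have ho : IsOpen (interior (convexHull ℝ (A : Set ℂ))) := isOpen_interior
  have hcont : Continuous (fun t : ℝ => z + (t : ℂ) * ⟨α, β⟩) := by fun_prop
  have hn : ∀ᶠ t : ℝ in nhds 0, z + (t : ℂ) * ⟨α, β⟩ ∈ interior (convexHull ℝ (A : Set ℂ)) := by
    apply hcont.continuousAt.eventually_mem
    apply ho.mem_nhds
    simpa using hz.1
  obtain ⟨ε, hε, hb⟩ := Metric.eventually_nhds_iff.1 hn
  have h3 := hull_le h1 (interior_subset (hb (y := ε / 2) (by
    rw [Real.dist_eq, sub_zero, abs_of_pos (by linarith)]; linarith)))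
  have h4 := hull_le hB (interior_subset hz.2)
  simp at h3
  nlinarith

lemma SSep.disj {A B : Finset ℂ} (h : SSep A B) {z : ℂ}
    (hA : z ∈ convexHull ℝ (A : Set ℂ)) (hB : z ∈ convexHull ℝ (B : Set ℂ)) : False := by
  obtain ⟨α, β, r, h1, h2⟩ := h
  have hc : Convex ℝ {z : ℂ | α * z.re + β * z.im < r} := by
    apply convex_halfSpace_lt (f := fun z : ℂ => α * z.re + β * z.im)
    constructor
    · intro x y; simp; ring
    · intro c x; simp; ring
  have h5 : α * z.re + β * z.im < r :=
    (convexHull_min (s := (A : Set ℂ)) (fun v hv => h1 v hv) hc) hA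
  have h4 := hull_le (α := -α) (β := -β) (r := -r) (fun v hv => by
    have := h2 v hv; linarith) hB
  linarith

/-! ### Combinatorial data -/

/-- Lower triangles. -/
def lowT (i : ℕ) : ℕ × ℕ × ℕ :=
  if i < 17 then (i, i + 1, 44 + i) else if i = 17 then (0, 18, 19) else (17, 20, 21)

/-- Upper triangles. -/
def upT (i : ℕ) : ℕ × ℕ × ℕ :=
  if i < 17 then (22 + i, 23 + i, 44 + i) else if i = 17 then (22, 40, 41) else (39, 42, 43)

def T0 : List (ℕ × ℕ × ℕ) := (List.range 19).map lowT ++ (List.range 19).map upT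

def Ed : List (ℕ × ℕ) := T0.flatMap fun τ => [(τ.1, τ.2.1), (τ.1, τ.2.2), (τ.2.1, τ.2.2)]

lemma mem_T0 {τ : ℕ × ℕ × ℕ} : τ ∈ T0 ↔ ∃ i < 19, τ = lowT i ∨ τ = upT i := by
  simp only [T0, List.mem_append, List.mem_map, List.mem_range]
  constructor
  · rintro (⟨i, hi, rfl⟩ | ⟨i, hi, rfl⟩)
    · exact ⟨i, hi, Or.inl rfl⟩
    · exact ⟨i, hi, Or.inr rfl⟩
  · rintro ⟨i, hi, rfl | rfl⟩
    · exact Or.inl ⟨i, hi, rfl⟩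
    · exact Or.inr ⟨i, hi, rfl⟩

lemma T0_nodup : T0.Nodup := by decide +kernel
lemma T0_length : T0.length = 38 := by decide +kernel
lemma Ed_nodup : Ed.Nodup := by decide +kernel
lemma T0_sorted : ∀ τ ∈ T0, τ.1 < τ.2.1 ∧ τ.2.1 < τ.2.2 ∧ τ.2.2 < 61 := by decide +kernel
lemma Ed_sorted : ∀ p ∈ Ed, p.1 < p.2 ∧ p.2 < 61 := by decide +kernel

lemma mem_Ed {p : ℕ × ℕ} : p ∈ Ed ↔ ∃ τ ∈ T0, p = (τ.1, τ.2.1) ∨ p = (τ.1, τ.2.2) ∨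
    p = (τ.2.1, τ.2.2) := by
  simp [Ed, List.mem_flatMap]

lemma tri_check : ∀ p ∈ Ed, ∀ q ∈ Ed, p.1 = q.1 → p.2 < q.2 → (p.2, q.2) ∈ Ed →
    (p.1, p.2, q.2) ∈ T0 := by decide +kernel

def isTwo (v : ℕ) : Bool := (18 ≤ v && v ≤ 21) || (40 ≤ v && v ≤ 43)

lemma deg_check : ∀ v ∈ List.range 61,
    (Ed.filter fun p => p.1 == v || p.2 == v).length = if isTwo v then 2 else 4 := by
  decide +kernel

end HarborthG1


namespace HarborthG1

open UnitDistGraph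

def pr (f : ℕ → ℂ) (p : ℕ × ℕ) : Finset ℂ := {f p.1, f p.2}

def tr (f : ℕ → ℂ) (τ : ℕ × ℕ × ℕ) : Finset ℂ := {f τ.1, f τ.2.1, f τ.2.2}

lemma pr_sub {f : ℕ → ℂ} {p : ℕ × ℕ} {τ : ℕ × ℕ × ℕ}
    (h : p = (τ.1, τ.2.1) ∨ p = (τ.1, τ.2.2) ∨ p = (τ.2.1, τ.2.2)) : pr f p ⊆ tr f τ := by
  rcases h with rfl | rfl | rfl <;> intro x <;> simp [pr, tr] <;> tauto

lemma perm3 {x y z x' y' z' : ℂ} (h : ∀ u, (u = x ∨ u = y ∨ u = z) ↔ (u = x' ∨ u = y' ∨ u = z')) :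
    ({x, y, z} : Finset ℂ) = {x', y', z'} := by
  ext u; simpa using h u

/-- The graph obtained from a placement `f` of the 61 labels. -/
def mkG (f : ℕ → ℂ) (hunit : ∀ p ∈ Ed, dist (f p.1) (f p.2) = 1) : UnitDistGraph where
  V := (Finset.range 61).image f
  E := Ed.toFinset.image (pr f)
  edge_sub := by
    intro e he
    obtain ⟨p, hp, rfl⟩ := Finset.mem_image.1 he
    have h := Ed_sorted p (List.mem_toFinset.1 hp)
    intro x hx
    simp only [pr, Finset.mem_insert, Finset.mem_singleton] at hx
    rcases hx with rfl | rfl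
    · exact Finset.mem_image_of_mem _ (Finset.mem_range.2 (by omega))
    · exact Finset.mem_image_of_mem _ (Finset.mem_range.2 (by omega))
  edge_pair := by
    intro e he
    obtain ⟨p, hp, rfl⟩ := Finset.mem_image.1 he
    have h := hunit p (List.mem_toFinset.1 hp)
    refine ⟨f p.1, f p.2, ?_, rfl, h⟩
    intro h'
    rw [h', dist_self] at h
    norm_num at h

section
variable {f : ℕ → ℂ}

lemma pr_inj (hinj : ∀ a < 61, ∀ b < 61, f a = f b → a = b)
    {p q : ℕ × ℕ} (hp : p ∈ Ed) (hq : q ∈ Ed) (h : pr f p = pr f q) : p = q := by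
  have h1 := Ed_sorted p hp
  have h2 := Ed_sorted q hq
  have a1 : f p.1 ∈ pr f q := h ▸ (by simp [pr])
  have a2 : f p.2 ∈ pr f q := h ▸ (by simp [pr])
  simp only [pr, Finset.mem_insert, Finset.mem_singleton] at a1 a2
  have b1 : p.1 = q.1 ∨ p.1 = q.2 := a1.imp (hinj _ (by omega) _ (by omega))
    (hinj _ (by omega) _ (by omega))
  have b2 : p.2 = q.1 ∨ p.2 = q.2 := a2.imp (hinj _ (by omega) _ (by omega))
    (hinj _ (by omega) _ (by omega))
  ext <;> omega

lemma tr_inj (hinj : ∀ a < 61, ∀ b < 61, f a = f b → a = b)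
    {p q : ℕ × ℕ × ℕ} (hp : p ∈ T0) (hq : q ∈ T0) (h : tr f p = tr f q) : p = q := by
  have h1 := T0_sorted p hp
  have h2 := T0_sorted q hq
  have a1 : f p.1 ∈ tr f q := h ▸ (by simp [tr])
  have a2 : f p.2.1 ∈ tr f q := h ▸ (by simp [tr])
  have a3 : f p.2.2 ∈ tr f q := h ▸ (by simp [tr])
  simp only [tr, Finset.mem_insert, Finset.mem_singleton] at a1 a2 a3
  have b1 : p.1 = q.1 ∨ p.1 = q.2.1 ∨ p.1 = q.2.2 := a1.imp (hinj _ (by omega) _ (by omega))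
    (Or.imp (hinj _ (by omega) _ (by omega)) (hinj _ (by omega) _ (by omega)))
  have b2 : p.2.1 = q.1 ∨ p.2.1 = q.2.1 ∨ p.2.1 = q.2.2 :=
    a2.imp (hinj _ (by omega) _ (by omega))
    (Or.imp (hinj _ (by omega) _ (by omega)) (hinj _ (by omega) _ (by omega)))
  have b3 : p.2.2 = q.1 ∨ p.2.2 = q.2.1 ∨ p.2.2 = q.2.2 :=
    a3.imp (hinj _ (by omega) _ (by omega))
    (Or.imp (hinj _ (by omega) _ (by omega)) (hinj _ (by omega) _ (by omega)))
  ext <;> omega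

lemma tr_card (hinj : ∀ a < 61, ∀ b < 61, f a = f b → a = b)
    {p : ℕ × ℕ × ℕ} (hp : p ∈ T0) : (tr f p).card = 3 := by
  have h1 := T0_sorted p hp
  rw [tr, Finset.card_eq_three]
  refine ⟨_, _, _, ?_, ?_, ?_, rfl⟩
  · intro h; have := hinj _ (by omega) _ (by omega) h; omega
  · intro h; have := hinj _ (by omega) _ (by omega) h; omega
  · intro h; have := hinj _ (by omega) _ (by omega) h; omega

lemma mem_E (hunit : ∀ p ∈ Ed, dist (f p.1) (f p.2) = 1) {e : Finset ℂ} : e ∈ (mkG f hunit).E ↔ ∃ p ∈ Ed, e = pr f p := by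
  simp only [mkG, Finset.mem_image, List.mem_toFinset, eq_comm]

lemma mem_V (hunit : ∀ p ∈ Ed, dist (f p.1) (f p.2) = 1) {v : ℂ} : v ∈ (mkG f hunit).V ↔ ∃ k < 61, v = f k := by
  simp only [mkG, Finset.mem_image, Finset.mem_range, eq_comm]

lemma tr_isUnit (hinj : ∀ a < 61, ∀ b < 61, f a = f b → a = b)
    (hunit : ∀ p ∈ Ed, dist (f p.1) (f p.2) = 1)
    {τ : ℕ × ℕ × ℕ} (hτ : τ ∈ T0) : (mkG f hunit).IsUnitTriangle (tr f τ) := by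
  have h1 := T0_sorted τ hτ
  refine ⟨?_, tr_card hinj hτ, ?_⟩
  · intro x hx
    rw [mem_V]
    simp only [tr, Finset.mem_insert, Finset.mem_singleton] at hx
    rcases hx with rfl | rfl | rfl
    · exact ⟨_, by omega, rfl⟩
    · exact ⟨_, by omega, rfl⟩
    · exact ⟨_, by omega, rfl⟩
  · have e1 : pr f (τ.1, τ.2.1) ∈ (mkG f hunit).E :=
      (mem_E hunit).2 ⟨_, mem_Ed.2 ⟨τ, hτ, by simp⟩, rfl⟩
    have e2 : pr f (τ.1, τ.2.2) ∈ (mkG f hunit).E :=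
      (mem_E hunit).2 ⟨_, mem_Ed.2 ⟨τ, hτ, by simp⟩, rfl⟩
    have e3 : pr f (τ.2.1, τ.2.2) ∈ (mkG f hunit).E :=
      (mem_E hunit).2 ⟨_, mem_Ed.2 ⟨τ, hτ, by simp⟩, rfl⟩
    simp only [pr] at e1 e2 e3
    intro x hx y hy hxy
    simp only [tr, Finset.mem_insert, Finset.mem_singleton] at hx hy
    rcases hx with rfl | rfl | rfl <;> rcases hy with rfl | rfl | rfl <;>
      first
        | exact absurd rfl hxy
        | assumption
        | (rw [Finset.pair_comm]; assumption)

lemma adj_of (hinj : ∀ a < 61, ∀ b < 61, f a = f b → a = b)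
    (hunit : ∀ p ∈ Ed, dist (f p.1) (f p.2) = 1)
    {a b : ℕ} (ha : a < b) (hb : b < 61)
    (h : ({f a, f b} : Finset ℂ) ∈ (mkG f hunit).E) : (a, b) ∈ Ed := by
  obtain ⟨p, hp, he⟩ := (mem_E hunit).1 h
  have h2 := Ed_sorted p hp
  have a1 : f a ∈ pr f p := he ▸ (by simp)
  have a2 : f b ∈ pr f p := he ▸ (by simp)
  simp only [pr, Finset.mem_insert, Finset.mem_singleton] at a1 a2
  have b1 : a = p.1 ∨ a = p.2 := a1.imp (hinj _ (by omega) _ (by omega))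
    (hinj _ (by omega) _ (by omega))
  have b2 : b = p.1 ∨ b = p.2 := a2.imp (hinj _ (by omega) _ (by omega))
    (hinj _ (by omega) _ (by omega))
  have : (a, b) = p := by ext <;> simp <;> omega
  rwa [this]

lemma isUnit_iff (hinj : ∀ a < 61, ∀ b < 61, f a = f b → a = b)
    (hunit : ∀ p ∈ Ed, dist (f p.1) (f p.2) = 1)
    {t : Finset ℂ} :
    (mkG f hunit).IsUnitTriangle t ↔ ∃ τ ∈ T0, t = tr f τ := by
  constructor
  · rintro ⟨hV, hc, hE⟩
    obtain ⟨x, y, z, hxy, hxz, hyz, rfl⟩ := Finset.card_eq_three.1 hc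
    obtain ⟨a, ha, rfl⟩ := (mem_V hunit).1 (hV (by simp : x ∈ _))
    obtain ⟨b, hb, rfl⟩ := (mem_V hunit).1 (hV (by simp : y ∈ _))
    obtain ⟨c, hc', rfl⟩ := (mem_V hunit).1 (hV (by simp : z ∈ _))
    have key : ∀ a b c : ℕ, a < b → b < c → c < 61 → ({f a, f b} : Finset ℂ) ∈ (mkG f hunit).E →
        ({f a, f c} : Finset ℂ) ∈ (mkG f hunit).E → ({f b, f c} : Finset ℂ) ∈ (mkG f hunit).E →
        (a, b, c) ∈ T0 := by
      intro a b c hab hbc hc h1 h2 h3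
      exact tri_check _ (adj_of hinj hunit hab (by omega) h1) _
        (adj_of hinj hunit (by omega) hc h2) rfl hbc (adj_of hinj hunit hbc hc h3)
    have hab : a ≠ b := fun h => hxy (by rw [h])
    have hac : a ≠ c := fun h => hxz (by rw [h])
    have hbc : b ≠ c := fun h => hyz (by rw [h])
    have e1 := hE (f a) (by simp) (f b) (by simp) hxy
    have e2 := hE (f a) (by simp) (f c) (by simp) hxz
    have e3 := hE (f b) (by simp) (f c) (by simp) hyz
    have e1' := hE (f b) (by simp) (f a) (by simp) hxy.symm
    have e2' := hE (f c) (by simp) (f a) (by simp) hxz.symm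
    have e3' := hE (f c) (by simp) (f b) (by simp) hyz.symm
    rcases lt_or_gt_of_ne hab with h1 | h1 <;> rcases lt_or_gt_of_ne hac with h2 | h2 <;>
      rcases lt_or_gt_of_ne hbc with h3 | h3
    · exact ⟨_, key a b c h1 h3 hc' e1 e2 e3, rfl⟩
    · refine ⟨_, key a c b h2 h3 hb e2 e1 e3', ?_⟩
      exact perm3 (fun u => by clear * -; tauto)
    · omega
    · refine ⟨_, key c a b h2 h1 hb e2' e3' e1, ?_⟩
      exact perm3 (fun u => by clear * -; tauto)
    · refine ⟨_, key b a c h1 h2 hc' e1' e3 e2, ?_⟩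
      exact perm3 (fun u => by clear * -; tauto)
    · omega
    · refine ⟨_, key b c a h3 h2 ha e3 e1' e2', ?_⟩
      exact perm3 (fun u => by clear * -; tauto)
    · refine ⟨_, key c b a h3 h1 ha e3' e2' e1', ?_⟩
      exact perm3 (fun u => by clear * -; tauto)
  · rintro ⟨τ, hτ, rfl⟩
    exact tr_isUnit hinj hunit hτ

lemma tri_count (hinj : ∀ a < 61, ∀ b < 61, f a = f b → a = b)
    (hunit : ∀ p ∈ Ed, dist (f p.1) (f p.2) = 1)
    : (mkG f hunit).triangleCount = 38 := by
  have : {t : Finset ℂ | (mkG f hunit).IsUnitTriangle t} =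
      ((T0.toFinset.image (tr f) : Finset (Finset ℂ)) : Set (Finset ℂ)) := by
    ext t
    simp only [Set.mem_ofPred_eq, isUnit_iff hinj hunit, Finset.coe_image, Set.mem_image,
      Finset.mem_coe, List.mem_toFinset, eq_comm]
  rw [triangleCount, this, Set.ncard_coe_finset, Finset.card_image_of_injOn,
    List.toFinset_card_of_nodup T0_nodup, T0_length]
  intro p hp q hq h
  exact tr_inj hinj (List.mem_toFinset.1 hp) (List.mem_toFinset.1 hq) h

lemma deg_eq (hinj : ∀ a < 61, ∀ b < 61, f a = f b → a = b)
    (hunit : ∀ p ∈ Ed, dist (f p.1) (f p.2) = 1)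
    {v : ℕ} (hv : v < 61) : (mkG f hunit).degree (f v) = if isTwo v then 2 else 4 := by
  have : {e : Finset ℂ | e ∈ (mkG f hunit).E ∧ f v ∈ e} =
      (((Ed.filter fun p => p.1 == v || p.2 == v).toFinset.image (pr f) :
        Finset (Finset ℂ)) : Set (Finset ℂ)) := by
    ext e
    simp only [Set.mem_ofPred_eq, mem_E hunit, Finset.coe_image, Set.mem_image,
      Finset.mem_coe, List.mem_toFinset, List.mem_filter]
    constructor
    · rintro ⟨⟨p, hp, rfl⟩, h⟩
      have h2 := Ed_sorted p hp
      refine ⟨p, ⟨hp, ?_⟩, rfl⟩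
      simp only [pr, Finset.mem_insert, Finset.mem_singleton] at h
      rcases h with h | h
      · simp [hinj _ hv _ (by omega) h]
      · simp [hinj _ hv _ (by omega) h]
    · rintro ⟨p, ⟨hp, h⟩, rfl⟩
      refine ⟨⟨p, hp, rfl⟩, ?_⟩
      simp only [Bool.or_eq_true, beq_iff_eq] at h
      rcases h with h | h <;> simp [pr, h]
  rw [degree, this, Set.ncard_coe_finset, Finset.card_image_of_injOn,
    List.toFinset_card_of_nodup (Ed_nodup.filter _), deg_check v (List.mem_range.2 hv)]
  intro p hp q hq h
  simp only [Finset.mem_coe, List.mem_toFinset, List.mem_filter] at hp hq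
  exact pr_inj hinj hp.1 hq.1 h

lemma only_unit (hinj : ∀ a < 61, ∀ b < 61, f a = f b → a = b)
    (hunit : ∀ p ∈ Ed, dist (f p.1) (f p.2) = 1)
    : (mkG f hunit).OnlyUnitTriangles := by
  intro e he
  obtain ⟨p, hp, rfl⟩ := (mem_E hunit).1 he
  obtain ⟨τ, hτ, h⟩ := mem_Ed.1 hp
  refine ⟨_, tr_isUnit hinj hunit hτ, ?_⟩
  exact pr_sub h

lemma nonoverlap (hinj : ∀ a < 61, ∀ b < 61, f a = f b → a = b)
    (hunit : ∀ p ∈ Ed, dist (f p.1) (f p.2) = 1)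
    (hsep : ∀ τ ∈ T0, ∀ σ ∈ T0, τ ≠ σ → Sep (tr f τ) (tr f σ)) :
    (mkG f hunit).NonOverlapping := by
  intro t₁ t₂ h1 h2 hne
  obtain ⟨τ, hτ, rfl⟩ := (isUnit_iff hinj hunit).1 h1
  obtain ⟨σ, hσ, rfl⟩ := (isUnit_iff hinj hunit).1 h2
  exact (hsep τ hτ σ hσ (fun h => hne (by rw [h]))).disj

/-- Parallel edges of the same or of different triangles that meet coincide. -/
lemma par_eq
    (hcls : ∀ τ ∈ T0, ∃ K : ℂ, (f τ.1 - f τ.2.1) ^ 6 = K ∧ (f τ.1 - f τ.2.2) ^ 6 = K ∧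
      (f τ.2.1 - f τ.2.2) ^ 6 = K ∧
      ∀ σ ∈ T0, τ ≠ σ → (f σ.1 - f σ.2.1) ^ 6 = K → SSep (tr f τ) (tr f σ))
    (hunit : ∀ p ∈ Ed, dist (f p.1) (f p.2) = 1)
    {p q : ℕ × ℕ} (hp : p ∈ Ed) (hq : q ∈ Ed)
    (hD : (f p.1 - f p.2) ^ 2 = (f q.1 - f q.2) ^ 2) {z : ℂ}
    (hzp : z ∈ edgeSeg (pr f p)) (hzq : z ∈ edgeSeg (pr f q)) : p = q := by
  obtain ⟨τ, hτ, hp'⟩ := mem_Ed.1 hp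
  obtain ⟨σ, hσ, hq'⟩ := mem_Ed.1 hq
  obtain ⟨K, k1, k2, k3, hK⟩ := hcls τ hτ
  obtain ⟨L, l1, l2, l3, -⟩ := hcls σ hσ
  have sp : pr f p ⊆ tr f τ := pr_sub hp'
  have sq : pr f q ⊆ tr f σ := pr_sub hq'
  have hKp : (f p.1 - f p.2) ^ 6 = K := by
    rcases hp' with rfl | rfl | rfl <;> assumption
  have hLq : (f q.1 - f q.2) ^ 6 = L := by
    rcases hq' with rfl | rfl | rfl <;> assumption
  have hKL : L = K := by
    rw [← hKp, ← hLq]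
    calc (f q.1 - f q.2) ^ 6 = ((f q.1 - f q.2) ^ 2) ^ 3 := by ring
      _ = (f p.1 - f p.2) ^ 6 := by rw [← hD]; ring
  have hts : τ = σ := by
    by_contra hne
    refine (hK σ hσ hne (l1.trans hKL)).disj (z := z) ?_ ?_
    · exact convexHull_mono (Finset.coe_subset.2 sp) hzp
    · exact convexHull_mono (Finset.coe_subset.2 sq) hzq
  subst hts
  have d1 := hunit _ (mem_Ed.2 ⟨τ, hτ, Or.inl rfl⟩)
  have d2 := hunit _ (mem_Ed.2 ⟨τ, hτ, Or.inr (Or.inl rfl)⟩)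
  have d3 := hunit _ (mem_Ed.2 ⟨τ, hτ, Or.inr (Or.inr rfl)⟩)
  simp only at d1 d2 d3
  have key : ∀ x y w : ℂ, dist x y = 1 → dist x w = 1 → dist y w = 1 →
      (x - y) ^ 2 = (x - w) ^ 2 → False := by
    intro x y w h1 h2 h3 h
    have h' : (w - y) * (2 * x - y - w) = 0 := by linear_combination h
    rcases mul_eq_zero.1 h' with h' | h'
    · rw [sub_eq_zero] at h'
      rw [h', dist_self] at h3; norm_num at h3
    · have : y - w = 2 * (x - w) := by linear_combination (-1) * h'
      rw [dist_eq_norm, this, norm_mul, ← dist_eq_norm, h2] at h3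
      norm_num at h3
  have key' : ∀ x y w : ℂ, dist x y = 1 → dist x w = 1 → dist y w = 1 →
      (x - y) ^ 2 = (y - w) ^ 2 → False := by
    intro x y w h1 h2 h3 h
    exact key y x w (by rwa [dist_comm]) h3 h2 (by linear_combination h)
  have key'' : ∀ x y w : ℂ, dist x y = 1 → dist x w = 1 → dist y w = 1 →
      (x - w) ^ 2 = (y - w) ^ 2 → False := by
    intro x y w h1 h2 h3 h
    exact key w x y (by rwa [dist_comm]) (by rwa [dist_comm]) h1 (by linear_combination h)
  rcases hp' with rfl | rfl | rfl <;> rcases hq' with rfl | rfl | rfl <;> simp only at hD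
  · rfl
  · exact (key _ _ _ d1 d2 d3 hD).elim
  · exact (key' _ _ _ d1 d2 d3 hD).elim
  · exact (key _ _ _ d1 d2 d3 hD.symm).elim
  · rfl
  · exact (key'' _ _ _ d1 d2 d3 hD).elim
  · exact (key' _ _ _ d1 d2 d3 hD.symm).elim
  · exact (key'' _ _ _ d1 d2 d3 hD.symm).elim
  · rfl

lemma edgeSeg_pair (x y : ℂ) : edgeSeg {x, y} = segment ℝ x y := by
  rw [edgeSeg, Finset.coe_pair, convexHull_pair]

lemma sq_dir {x y u v : ℂ} (hu : u ∈ segment ℝ x y) (hv : v ∈ segment ℝ x y)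
    (h : dist u v = 1) : (u - v) ^ 2 = ((y - x) / (‖y - x‖ : ℂ)) ^ 2 := by
  rw [segment_eq_image'] at hu hv
  obtain ⟨s, -, rfl⟩ := hu
  obtain ⟨t, -, rfl⟩ := hv
  have e : x + s • (y - x) - (x + t • (y - x)) = ((s - t : ℝ) : ℂ) * (y - x) := by
    simp only [Complex.real_smul]; push_cast; ring
  simp only at h
  rw [dist_eq_norm, e, norm_mul, Complex.norm_real, Real.norm_eq_abs] at h
  simp only [e]
  have hne : (‖y - x‖ : ℂ) ≠ 0 := by
    intro h0
    have : ‖y - x‖ = 0 := by exact_mod_cast h0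
    rw [this, mul_zero] at h; norm_num at h
  have hsq : (s - t) ^ 2 * ‖y - x‖ ^ 2 = 1 := by
    rw [← sq_abs (s - t), ← mul_pow, h, one_pow]
  have hsq' : ((s - t : ℝ) : ℂ) ^ 2 * (‖y - x‖ : ℂ) ^ 2 = 1 := by exact_mod_cast hsq
  rw [div_pow, eq_div_iff (pow_ne_zero _ hne)]
  linear_combination (y - x) ^ 2 * hsq'

lemma no_additional (hunit : ∀ p ∈ Ed, dist (f p.1) (f p.2) = 1)
    (hcls : ∀ τ ∈ T0, ∃ K : ℂ, (f τ.1 - f τ.2.1) ^ 6 = K ∧ (f τ.1 - f τ.2.2) ^ 6 = K ∧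
      (f τ.2.1 - f τ.2.2) ^ 6 = K ∧
      ∀ σ ∈ T0, τ ≠ σ → (f σ.1 - f σ.2.1) ^ 6 = K → SSep (tr f τ) (tr f σ)) :
    (mkG f hunit).NoAdditionalTriangles := by
  intro x _ y _ z _ hxy _ _ _ _ hc _ _
  obtain ⟨S, hS, hseg⟩ := hc
  -- every edge in `S` is parallel to the segment
  have hdir : ∀ e ∈ S, ∃ p ∈ Ed, e = pr f p ∧
      (f p.1 - f p.2) ^ 2 = ((y - x) / (‖y - x‖ : ℂ)) ^ 2 := by
    intro e he
    obtain ⟨p, hp, rfl⟩ := (mem_E hunit).1 (hS he)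
    have hsub : edgeSeg (pr f p) ⊆ segment ℝ x y := by
      rw [hseg]; exact Set.subset_biUnion_of_mem (u := fun e => edgeSeg e) he
    rw [pr, edgeSeg_pair] at hsub
    exact ⟨p, hp, rfl, sq_dir (hsub (left_mem_segment ℝ _ _)) (hsub (right_mem_segment ℝ _ _))
      (hunit p hp)⟩
  have hdisj : ∀ e ∈ S, ∀ e' ∈ S, ∀ w, w ∈ edgeSeg e → w ∈ edgeSeg e' → e = e' := by
    intro e he e' he' w hw hw'
    obtain ⟨p, hp, rfl, h1⟩ := hdir e he
    obtain ⟨q, hq, rfl, h2⟩ := hdir e' he'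
    rw [par_eq hcls hunit hp hq (h1.trans h2.symm) hw hw']
  have hclosed : ∀ e ∈ S, IsClosed (edgeSeg e) := by
    intro e he
    exact (Finset.finite_toSet e).isClosed_convexHull ℝ
  have hx : x ∈ ⋃ e ∈ S, edgeSeg e := hseg ▸ left_mem_segment ℝ x y
  simp only [Set.mem_iUnion] at hx
  obtain ⟨e, he, hxe⟩ := hx
  have hB : IsClosed (⋃ e' ∈ S.erase e, edgeSeg e') := by
    apply Set.Finite.isClosed_biUnion (Finset.finite_toSet (S.erase e))
    intro i hi
    exact hclosed i (Finset.mem_of_mem_erase hi)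
  have hsubset : segment ℝ x y ⊆ edgeSeg e := by
    have hpre : IsPreconnected (segment ℝ x y) := (convex_segment x y).isPreconnected
    have hcov : segment ℝ x y ⊆ edgeSeg e ∪ ⋃ e' ∈ S.erase e, edgeSeg e' := by
      intro w hw
      rw [hseg] at hw
      simp only [Set.mem_iUnion] at hw
      obtain ⟨e', he', hw⟩ := hw
      by_cases h : e' = e
      · exact Or.inl (h ▸ hw)
      · refine Or.inr ?_
        simp only [Set.mem_iUnion]
        exact ⟨e', Finset.mem_erase.2 ⟨h, he'⟩, hw⟩
    have hdj : segment ℝ x y ∩ (edgeSeg e ∩ ⋃ e' ∈ S.erase e, edgeSeg e') = ∅ := by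
      rw [Set.eq_empty_iff_forall_notMem]
      rintro w ⟨-, hw, hw'⟩
      simp only [Set.mem_iUnion] at hw'
      obtain ⟨e', he', hw'⟩ := hw'
      rw [Finset.mem_erase] at he'
      exact he'.1 (hdisj e' he'.2 e he w hw' hw)
    rcases isPreconnected_iff_subset_of_disjoint_closed.1 hpre _ _ (hclosed e he) hB hcov hdj
      with h | h
    · exact h
    · exfalso
      have : x ∈ segment ℝ x y ∩ (edgeSeg e ∩ ⋃ e' ∈ S.erase e, edgeSeg e') :=
        ⟨left_mem_segment ℝ x y, hxe, h (left_mem_segment ℝ x y)⟩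
      rw [hdj] at this
      exact this
  have hsup : edgeSeg e ⊆ segment ℝ x y := by
    rw [hseg]; exact Set.subset_biUnion_of_mem (u := fun e => edgeSeg e) he
  have heq : segment ℝ x y = edgeSeg e := hsubset.antisymm hsup
  obtain ⟨p, hp, rfl, -⟩ := hdir e he
  rw [pr, edgeSeg_pair, ← convexHull_pair, ← convexHull_pair] at heq
  have h := congrArg Metric.diam heq
  rw [convexHull_diam, convexHull_diam, Metric.diam_pair, Metric.diam_pair] at h
  rw [h, hunit p hp]

end

end HarborthG1


namespace HarborthG1

/-- Real parameters of the construction: `C = cos δ`, `S = sin δ`, `p = cos φ`, `q = sin φ`,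
`w = √3`, where `φ = π / 100` and `tan δ = 17 tan φ`. -/
structure Params where
  C : ℝ
  S : ℝ
  p : ℝ
  q : ℝ
  w : ℝ
  w_pos : 0 < w
  w_sq : w ^ 2 = 3
  C_pos : 0 < C
  S_pos : 0 < S
  CS : C ^ 2 + S ^ 2 = 1
  pq : p ^ 2 + q ^ 2 = 1
  q_pos : 0 < q
  rel : S * p = 17 * q * C
  tight : w * S < C
  half : C < 2 * S
  p_big : 99 / 100 < p
  q_small : q < 4 / 100

namespace Params

variable (P : Params)

/-- Vertical coordinate of the zigzag. -/
def dep (i : ℕ) : ℝ := if i % 2 = 0 then (P.w * P.C - P.S) / 2 else (P.w * P.C + P.S) / 2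

def off (i : ℕ) : ℝ := if i % 2 = 0 then (P.C + P.w * P.S) / 2 else (P.C - P.w * P.S) / 2

def bpt (i : ℕ) : ℂ := ⟨i * P.C, -P.dep i⟩

def apt (i : ℕ) : ℂ := ⟨i * P.C + P.off i, 0⟩

def low (k : ℕ) : ℂ :=
  if k < 18 then P.bpt k
  else if k = 18 then P.bpt 0 + ⟨(P.p - P.w * P.q) / 2, -(P.w * P.p + P.q) / 2⟩
  else if k = 19 then P.bpt 0 + ⟨-(P.p + P.w * P.q) / 2, -(P.w * P.p - P.q) / 2⟩
  else if k = 20 then P.bpt 17 + ⟨(P.p - P.w * P.q) / 2, -(P.w * P.p + P.q) / 2⟩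
  else P.bpt 17 + ⟨-(P.p + P.w * P.q) / 2, -(P.w * P.p - P.q) / 2⟩

/-- The placement of the labels. -/
def f (k : ℕ) : ℂ :=
  if k < 22 then P.low k else if k < 44 then (starRingEnd ℂ) (P.low (k - 22)) else P.apt (k - 44)

lemma f_low {k : ℕ} (h : k < 22) : P.f k = P.low k := by simp [f, h]
lemma f_b {k : ℕ} (h : k < 18) : P.f k = P.bpt k := by
  rw [f_low P (by omega), low, if_pos h]
lemma f_up {k : ℕ} (h : k < 22) : P.f (22 + k) = (starRingEnd ℂ) (P.f k) := by
  rw [f_low P h, f, if_neg (by omega), if_pos (by omega)]; simp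
lemma f_a (k : ℕ) : P.f (44 + k) = P.apt k := by
  rw [f, if_neg (by omega), if_neg (by omega)]; simp
lemma f_a_conj (k : ℕ) : P.f (44 + k) = (starRingEnd ℂ) (P.f (44 + k)) := by
  rw [f_a, apt]; apply Complex.ext <;> simp

lemma dep_even {i : ℕ} (h : i % 2 = 0) : P.dep i = (P.w * P.C - P.S) / 2 := by simp [dep, h]
lemma dep_odd {i : ℕ} (h : i % 2 = 1) : P.dep i = (P.w * P.C + P.S) / 2 := by simp [dep, h]
lemma off_even {i : ℕ} (h : i % 2 = 0) : P.off i = (P.C + P.w * P.S) / 2 := by simp [off, h]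
lemma off_odd {i : ℕ} (h : i % 2 = 1) : P.off i = (P.C - P.w * P.S) / 2 := by simp [off, h]

/-! numeric consequences -/
lemma w_lo : 173 / 100 < P.w := by nlinarith [P.w_sq, P.w_pos]
lemma w_hi : P.w < 174 / 100 := by nlinarith [P.w_sq, P.w_pos]
lemma three : 3 * P.S ^ 2 < P.C ^ 2 := by
  have h := P.tight
  have h2 : (P.w * P.S) ^ 2 < P.C ^ 2 :=
    pow_lt_pow_left₀ h (mul_pos P.w_pos P.S_pos).le (by norm_num)
  rw [mul_pow, P.w_sq] at h2
  exact h2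
lemma S_lt : P.S < 1 / 2 := by nlinarith [P.three, P.CS, P.S_pos]
lemma C_gt : 86 / 100 < P.C := by nlinarith [P.three, P.CS, P.C_pos]
lemma C_le : P.C ≤ 1 := by nlinarith [P.CS, sq_nonneg P.S, P.C_pos]
lemma p_le : P.p ≤ 1 := by nlinarith [P.pq, sq_nonneg P.q, P.p_big]
lemma S_lt_C : P.S < P.C := by linarith [P.S_lt, P.C_gt]
lemma wC_gt : P.S < P.w * P.C := by nlinarith [P.S_lt_C, P.w_lo, P.C_pos]
lemma dep_pos (i : ℕ) : 0 < P.dep i := by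
  have := P.wC_gt; have := P.S_pos
  unfold dep; split_ifs <;> linarith
lemma dep_le (i : ℕ) : P.dep i ≤ (P.w * P.C + P.S) / 2 := by
  have := P.S_pos
  unfold dep; split_ifs <;> linarith
lemma off_pos (i : ℕ) : 0 < P.off i := by
  have := P.tight; have := mul_pos P.w_pos P.S_pos; have := P.C_pos
  unfold off; split_ifs <;> linarith
lemma off_lt (i : ℕ) : P.off i < P.C := by
  have := P.tight; have := mul_pos P.w_pos P.S_pos; have := P.C_pos
  unfold off; split_ifs <;> linarith
lemma wq_pos : 0 < P.w * P.q := mul_pos P.w_pos P.q_pos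
lemma wq_lt : P.w * P.q < 7 / 100 := by nlinarith [P.w_hi, P.q_small, P.q_pos, P.w_pos]
lemma wp_gt : 171 / 100 < P.w * P.p := by nlinarith [P.w_lo, P.p_big]

/-! ### Data for the lower triangles -/

lemma row {i : ℕ} (hi : i < 17) {v : ℂ} (hv : v ∈ tr P.f (lowT i)) :
    i * P.C ≤ v.re ∧ v.re ≤ (i + 1) * P.C ∧ -((P.w * P.C + P.S) / 2) ≤ v.im ∧ v.im ≤ 0 ∧
    v.re + v.im < (i + 1) * P.C ∧ i * P.C < v.re - v.im ∧
    -(P.C * ((P.w * P.C - P.S) / 2)) ≤ P.S * v.re + P.C * v.im := by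
  have hC := P.C_pos
  have hS := P.S_pos
  have hi0 : (0 : ℝ) ≤ i := Nat.cast_nonneg i
  rw [lowT, if_pos hi, tr] at hv
  simp only at hv
  rw [f_b P (by omega : i < 18), f_b P (by omega : i + 1 < 18), f_a] at hv
  simp only [Finset.mem_insert, Finset.mem_singleton] at hv
  have hSC := mul_pos hS hC
  have hb : ∀ k : ℕ, 0 ≤ P.S * (k * P.C) - P.C * P.dep k + P.C * ((P.w * P.C - P.S) / 2) := by
    intro k
    unfold dep
    split_ifs with h
    · have : 0 ≤ (k : ℝ) * (P.S * P.C) := by positivity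
      linarith
    · have h1 : (1 : ℝ) ≤ k := by
        have : 1 ≤ k := by omega
        exact_mod_cast this
      have : P.S * P.C ≤ (k : ℝ) * (P.S * P.C) := by nlinarith
      linarith
  rcases hv with rfl | rfl | rfl
  · have h1 := P.dep_pos i
    have h2 := P.dep_le i
    have h3 := hb i
    simp only [bpt]
    refine ⟨le_rfl, by linarith, by linarith, by linarith, by linarith, by linarith, by linarith⟩
  · have h1 := P.dep_pos (i + 1)
    have h2 := P.dep_le (i + 1)
    have h3 := hb (i + 1)
    simp only [bpt]
    push_cast at h3 ⊢
    refine ⟨by linarith, by linarith, by linarith, by linarith, by linarith, by linarith,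
      by linarith⟩
  · have h1 := P.off_pos i
    have h2 := P.off_lt i
    have h3 : 0 ≤ P.S * (i * P.C + P.off i) := by positivity
    have h4 := P.wC_gt
    have h5 : 0 ≤ P.C * ((P.w * P.C - P.S) / 2) := by
      apply mul_nonneg hC.le; linarith
    simp only [apt]
    refine ⟨by linarith, by linarith, by linarith, by linarith, by linarith, by linarith,
      by linarith⟩

lemma f18 : P.f 18 = P.bpt 0 + ⟨(P.p - P.w * P.q) / 2, -(P.w * P.p + P.q) / 2⟩ := by
  simp [f, low]
lemma f19 : P.f 19 = P.bpt 0 + ⟨-(P.p + P.w * P.q) / 2, -(P.w * P.p - P.q) / 2⟩ := by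
  simp [f, low]
lemma f20 : P.f 20 = P.bpt 17 + ⟨(P.p - P.w * P.q) / 2, -(P.w * P.p + P.q) / 2⟩ := by
  simp [f, low]
lemma f21 : P.f 21 = P.bpt 17 + ⟨-(P.p + P.w * P.q) / 2, -(P.w * P.p - P.q) / 2⟩ := by
  simp [f, low]
lemma dep0 : P.dep 0 = (P.w * P.C - P.S) / 2 := by simp [dep]
lemma dep17 : P.dep 17 = (P.w * P.C + P.S) / 2 := by simp [dep]

lemma pt0 {v : ℂ} (hv : v ∈ tr P.f (lowT 17)) :
    v.re ≤ 1 / 2 ∧ v.im ≤ 0 ∧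
    P.S * v.re + P.C * v.im ≤ -(P.C * ((P.w * P.C - P.S) / 2)) := by
  have hC := P.C_pos
  have hS := P.S_pos
  have h1 := P.wq_pos
  have h2 := P.wq_lt
  have h3 := P.wp_gt
  have h4 := P.p_big
  have h5 := P.p_le
  have h6 := P.q_pos
  have h7 := P.q_small
  have h8 := P.wC_gt
  have h9 := P.S_lt_C
  rw [show lowT 17 = (0, 18, 19) by rfl] at hv
  simp only [tr, f18, f19, f_b P (show 0 < 18 by norm_num), Finset.mem_insert,
    Finset.mem_singleton] at hv
  rcases hv with rfl | rfl | rfl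
  · simp only [bpt, dep0]
    refine ⟨by simp, by linarith, by simp⟩
  · simp only [bpt, dep0, Complex.add_re, Complex.add_im]
    refine ⟨by simp; linarith, by linarith, ?_⟩
    have : P.S * ((P.p - P.w * P.q) / 2) ≤ P.C * ((P.w * P.p + P.q) / 2) :=
      mul_le_mul h9.le (by linarith) (by linarith) hC.le
    simp only [Nat.cast_zero, zero_mul, zero_add]
    linarith
  · simp only [bpt, dep0, Complex.add_re, Complex.add_im]
    refine ⟨by simp; linarith, by linarith, ?_⟩
    have k1 : 0 ≤ P.S * ((P.p + P.w * P.q) / 2) := mul_nonneg hS.le (by linarith)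
    have k2 : 0 ≤ P.C * ((P.w * P.p - P.q) / 2) := mul_nonneg hC.le (by linarith)
    simp only [Nat.cast_zero, zero_mul, zero_add]
    linarith

lemma pt1 {v : ℂ} (hv : v ∈ tr P.f (lowT 18)) :
    17 * P.C - 1 ≤ v.re ∧ v.im ≤ 0 ∧ v.im ≤ -((P.w * P.C + P.S) / 2) := by
  have hC := P.C_pos
  have hS := P.S_pos
  have h1 := P.wq_pos
  have h2 := P.wq_lt
  have h3 := P.wp_gt
  have h4 := P.p_big
  have h5 := P.p_le
  have h6 := P.q_pos
  have h7 := P.q_small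
  have h8 := P.wC_gt
  have h9 := P.S_lt_C
  rw [show lowT 18 = (17, 20, 21) by rfl] at hv
  simp only [tr, f20, f21, f_b P (show 17 < 18 by norm_num), Finset.mem_insert,
    Finset.mem_singleton] at hv
  rcases hv with rfl | rfl | rfl
  · simp only [bpt, dep17]
    push_cast
    refine ⟨by linarith, by linarith, by linarith⟩
  · simp only [bpt, dep17, Complex.add_re, Complex.add_im]
    push_cast
    refine ⟨by linarith, by linarith, by linarith⟩
  · simp only [bpt, dep17, Complex.add_re, Complex.add_im]
    push_cast
    refine ⟨by linarith, by linarith, by linarith⟩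

lemma low_im {i : ℕ} (hi : i < 19) {v : ℂ} (hv : v ∈ tr P.f (lowT i)) : v.im ≤ 0 := by
  rcases lt_or_ge i 17 with h | h
  · exact (P.row h hv).2.2.2.1
  · obtain rfl | rfl : i = 17 ∨ i = 18 := by omega
    · exact (P.pt0 hv).2.1
    · exact (P.pt1 hv).2.1

lemma up_conj {i : ℕ} {v : ℂ} (hv : v ∈ tr P.f (upT i)) :
    (starRingEnd ℂ) v ∈ tr P.f (lowT i) := by
  unfold upT at hv
  unfold lowT
  split_ifs at hv ⊢ with h1 h2
  · simp only [tr, Finset.mem_insert, Finset.mem_singleton] at hv ⊢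
    rw [show 23 + i = 22 + (i + 1) by omega, P.f_up (by omega), P.f_up (by omega), f_a_conj] at hv
    rcases hv with rfl | rfl | rfl <;> simp
  · simp only [tr, Finset.mem_insert, Finset.mem_singleton] at hv ⊢
    rw [show P.f 22 = _ from P.f_up (k := 0) (by omega),
      show P.f 40 = _ from P.f_up (k := 18) (by omega),
      show P.f 41 = _ from P.f_up (k := 19) (by omega)] at hv
    rcases hv with rfl | rfl | rfl <;> simp
  · simp only [tr, Finset.mem_insert, Finset.mem_singleton] at hv ⊢
    rw [show P.f 39 = _ from P.f_up (k := 17) (by omega),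
      show P.f 42 = _ from P.f_up (k := 20) (by omega),
      show P.f 43 = _ from P.f_up (k := 21) (by omega)] at hv
    rcases hv with rfl | rfl | rfl <;> simp

/-! ### Weak separation -/

lemma cast_C {i j : ℕ} (h : i < j) : ((i : ℝ) + 1) * P.C ≤ j * P.C := by
  apply mul_le_mul_of_nonneg_right _ P.C_pos.le
  exact_mod_cast h

lemma sep_low_lt {i j : ℕ} (hij : i < j) (hj : j < 19) :
    Sep (tr P.f (lowT i)) (tr P.f (lowT j)) := by
  rcases lt_or_ge j 17 with h | h
  · refine ⟨1, 0, (i + 1) * P.C, by norm_num, fun v hv => ?_, fun v hv => ?_⟩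
    · have := P.row (by omega : i < 17) hv; linarith
    · have := P.row h hv; have := P.cast_C hij; linarith
  · obtain rfl | rfl : j = 17 ∨ j = 18 := by omega
    · apply Sep.symm
      refine ⟨P.S, P.C, -(P.C * ((P.w * P.C - P.S) / 2)), by nlinarith [P.CS],
        fun v hv => (P.pt0 hv).2.2, fun v hv => (P.row hij hv).2.2.2.2.2.2⟩
    · rcases lt_or_ge i 17 with h' | h'
      · apply Sep.symm
        refine ⟨0, 1, -((P.w * P.C + P.S) / 2), by norm_num, fun v hv => ?_, fun v hv => ?_⟩
        · have := (P.pt1 hv).2.2; linarith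
        · have := P.row h' hv; linarith
      · obtain rfl : i = 17 := by omega
        refine ⟨1, 0, 1 / 2, by norm_num, fun v hv => ?_, fun v hv => ?_⟩
        · have := (P.pt0 hv).1; linarith
        · have := (P.pt1 hv).1; have := P.C_gt; linarith

lemma sep_low {i j : ℕ} (hij : i ≠ j) (hi : i < 19) (hj : j < 19) :
    Sep (tr P.f (lowT i)) (tr P.f (lowT j)) := by
  rcases lt_or_gt_of_ne hij with h | h
  · exact P.sep_low_lt h hj
  · exact (P.sep_low_lt h hi).symm

lemma sep_up {i j : ℕ} (hij : i ≠ j) (hi : i < 19) (hj : j < 19) :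
    Sep (tr P.f (upT i)) (tr P.f (upT j)) := by
  obtain ⟨α, β, r, h0, h1, h2⟩ := P.sep_low hij hi hj
  refine ⟨α, -β, r, by simpa using h0, fun v hv => ?_, fun v hv => ?_⟩
  · have := h1 _ (P.up_conj hv); simp at this; linarith
  · have := h2 _ (P.up_conj hv); simp at this; linarith

lemma sep_lu {i j : ℕ} (hi : i < 19) (hj : j < 19) :
    Sep (tr P.f (lowT i)) (tr P.f (upT j)) := by
  refine ⟨0, 1, 0, by norm_num, fun v hv => ?_, fun v hv => ?_⟩
  · have := P.low_im hi hv; linarith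
  · have := P.low_im hj (P.up_conj hv); simp at this; linarith

lemma sep_all : ∀ τ ∈ T0, ∀ σ ∈ T0, τ ≠ σ → Sep (tr P.f τ) (tr P.f σ) := by
  intro τ hτ σ hσ hne
  obtain ⟨i, hi, rfl | rfl⟩ := mem_T0.1 hτ <;> obtain ⟨j, hj, rfl | rfl⟩ := mem_T0.1 hσ
  · exact P.sep_low (fun h => hne (by rw [h])) hi hj
  · exact P.sep_lu hi hj
  · exact (P.sep_lu hj hi).symm
  · exact P.sep_up (fun h => hne (by rw [h])) hi hj

/-! ### Direction classes -/

def e : ℂ := ⟨P.C, P.S⟩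
def m : ℂ := ⟨P.p, P.q⟩
def om : ℂ := ⟨1 / 2, P.w / 2⟩

lemma om6 : P.om ^ 6 = 1 := by
  have h := P.w_sq
  have h3 : P.om ^ 3 = -1 := by
    apply Complex.ext
    · simp [om, pow_succ]; nlinarith
    · simp [om, pow_succ]; linear_combination (-P.w / 8) * h
  calc P.om ^ 6 = (P.om ^ 3) ^ 2 := by ring
    _ = 1 := by rw [h3]; ring

lemma pow6_re {c s : ℝ} (h : c ^ 2 + s ^ 2 = 1) :
    ((⟨c, s⟩ : ℂ) ^ 6).re = (1 - 2 * s ^ 2) * (4 * (1 - 2 * s ^ 2) ^ 2 - 3) := by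
  have hc : c ^ 2 = 1 - s ^ 2 := by linarith
  have h2 : (⟨c, s⟩ : ℂ) ^ 2 = ⟨1 - 2 * s ^ 2, 2 * s * c⟩ := by
    apply Complex.ext
    · simp [pow_two]; linarith
    · simp [pow_two]; ring
  have : (⟨c, s⟩ : ℂ) ^ 6 = ((⟨c, s⟩ : ℂ) ^ 2) ^ 3 := by ring
  rw [this, h2]
  simp [pow_succ]
  linear_combination (-12 * s ^ 2 * (1 - 2 * s ^ 2)) * hc

lemma pow6_im {c s : ℝ} (h : c ^ 2 + s ^ 2 = 1) :
    ((⟨c, s⟩ : ℂ) ^ 6).im = (2 * s * c) * (4 * (1 - 2 * s ^ 2) ^ 2 - 1) := by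
  have hc : c ^ 2 = 1 - s ^ 2 := by linarith
  have h2 : (⟨c, s⟩ : ℂ) ^ 2 = ⟨1 - 2 * s ^ 2, 2 * s * c⟩ := by
    apply Complex.ext
    · simp [pow_two]; linarith
    · simp [pow_two]; ring
  have : (⟨c, s⟩ : ℂ) ^ 6 = ((⟨c, s⟩ : ℂ) ^ 2) ^ 3 := by ring
  rw [this, h2]
  simp [pow_succ]
  linear_combination (-8 * s ^ 3 * c) * hc

lemma e_re : (P.e ^ 6).re < 0 := by
  rw [e, pow6_re P.CS]
  have h1 : P.S ^ 2 < 1 / 4 := by nlinarith [P.three, P.CS]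
  have h2 : 1 / 5 < P.S ^ 2 := by nlinarith [P.half, P.CS, P.S_pos, P.C_pos]
  apply mul_neg_of_pos_of_neg
  · linarith
  · nlinarith

lemma e_im : 0 < (P.e ^ 6).im := by
  rw [e, pow6_im P.CS]
  have h1 : P.S ^ 2 < 1 / 4 := by nlinarith [P.three, P.CS]
  have := P.S_pos
  have := P.C_pos
  apply mul_pos (by positivity)
  nlinarith

lemma m_re : 0 < (P.m ^ 6).re := by
  rw [m, pow6_re P.pq]
  have h1 : P.q ^ 2 < 1 / 100 := by nlinarith [P.q_small, P.q_pos]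
  apply mul_pos
  · linarith
  · nlinarith

lemma m_im : 0 < (P.m ^ 6).im := by
  rw [m, pow6_im P.pq]
  have h1 : P.q ^ 2 < 1 / 100 := by nlinarith [P.q_small, P.q_pos]
  have := P.q_pos
  have := P.p_big
  apply mul_pos
  · apply mul_pos <;> linarith
  · nlinarith

lemma e_norm : ‖P.e‖ = 1 := by
  rw [← sq_eq_sq₀ (norm_nonneg _) zero_le_one, ← Complex.normSq_eq_norm_sq, e, Complex.normSq_mk]
  linarith [P.CS]

lemma m_norm : ‖P.m‖ = 1 := by
  rw [← sq_eq_sq₀ (norm_nonneg _) zero_le_one, ← Complex.normSq_eq_norm_sq, m, Complex.normSq_mk]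
  linarith [P.pq]

/-- Direction class of a lower triangle. -/
def kl (i : ℕ) : ℂ :=
  if i < 17 then (if i % 2 = 0 then (starRingEnd ℂ) (P.e ^ 6) else P.e ^ 6)
  else (starRingEnd ℂ) (P.m ^ 6)

lemma kl_norm (i : ℕ) : ‖P.kl i‖ = 1 := by
  unfold kl
  split_ifs <;> simp [P.e_norm, P.m_norm]

lemma pow6_of {x u : ℂ} (k : ℕ) (h : x = u * P.om ^ k ∨ x = -(u * P.om ^ k)) :
    x ^ 6 = u ^ 6 := by
  have : x ^ 6 = (u * P.om ^ k) ^ 6 := by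
    rcases h with rfl | rfl
    · rfl
    · ring
  rw [this, mul_pow, ← pow_mul, mul_comm k 6, pow_mul, P.om6, one_pow, mul_one]

lemma om_sq : P.om ^ 2 = ⟨-1 / 2, P.w / 2⟩ := by
  have h := P.w_sq
  apply Complex.ext
  · simp [om, pow_two]; linarith
  · simp [om, pow_two]; ring

lemma low_cls {i : ℕ} (hi : i < 19) :
    (P.f (lowT i).1 - P.f (lowT i).2.1) ^ 6 = P.kl i ∧
    (P.f (lowT i).1 - P.f (lowT i).2.2) ^ 6 = P.kl i ∧
    (P.f (lowT i).2.1 - P.f (lowT i).2.2) ^ 6 = P.kl i := by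
  have hw := P.w_sq
  rcases lt_or_ge i 17 with h | h
  · rw [lowT, if_pos h, kl, if_pos h]
    simp only
    rw [f_b P (by omega), f_b P (by omega), f_a]
    rcases Nat.mod_two_eq_zero_or_one i with hp | hp
    · rw [if_pos hp, map_pow]
      have h1 : P.dep (i + 1) = _ := P.dep_odd (by omega)
      refine ⟨P.pow6_of 0 (Or.inr ?_), P.pow6_of 1 (Or.inr ?_), P.pow6_of 2 (Or.inr ?_)⟩
      · apply Complex.ext <;> simp [bpt, e, h1, P.dep_even hp] <;> ring
      · apply Complex.ext <;> simp [bpt, apt, e, om, P.off_even hp, P.dep_even hp] <;> ring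
      · rw [om_sq]
        apply Complex.ext <;> simp [bpt, apt, e, h1, P.off_even hp] <;> ring
    · rw [if_neg (by omega)]
      have h1 : P.dep (i + 1) = _ := P.dep_even (by omega)
      refine ⟨P.pow6_of 0 (Or.inr ?_), P.pow6_of 1 (Or.inr ?_), P.pow6_of 2 (Or.inr ?_)⟩
      · apply Complex.ext <;> simp [bpt, e, h1, P.dep_odd hp] <;> ring
      · apply Complex.ext <;> simp [bpt, apt, e, om, P.off_odd hp, P.dep_odd hp] <;> ring
      · rw [om_sq]
        apply Complex.ext <;> simp [bpt, apt, e, h1, P.off_odd hp] <;> ring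
  · rw [kl, if_neg (by omega), map_pow]
    obtain rfl | rfl : i = 17 ∨ i = 18 := by omega
    · rw [show lowT 17 = (0, 18, 19) by rfl]
      simp only [f18, f19, f_b P (show 0 < 18 by norm_num)]
      refine ⟨P.pow6_of 2 (Or.inl ?_), P.pow6_of 1 (Or.inl ?_), P.pow6_of 0 (Or.inl ?_)⟩
      · rw [om_sq]
        apply Complex.ext <;> simp [m] <;> ring
      · apply Complex.ext <;> simp [m, om] <;> ring
      · apply Complex.ext <;> simp [m] <;> ring
    · rw [show lowT 18 = (17, 20, 21) by rfl]
      simp only [f20, f21, f_b P (show 17 < 18 by norm_num)]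
      refine ⟨P.pow6_of 2 (Or.inl ?_), P.pow6_of 1 (Or.inl ?_), P.pow6_of 0 (Or.inl ?_)⟩
      · rw [om_sq]
        apply Complex.ext <;> simp [m] <;> ring
      · apply Complex.ext <;> simp [m, om] <;> ring
      · apply Complex.ext <;> simp [m] <;> ring

lemma up_eq (i : ℕ) : P.f (upT i).1 = (starRingEnd ℂ) (P.f (lowT i).1) ∧
    P.f (upT i).2.1 = (starRingEnd ℂ) (P.f (lowT i).2.1) ∧
    P.f (upT i).2.2 = (starRingEnd ℂ) (P.f (lowT i).2.2) := by
  unfold upT lowT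
  split_ifs with h1 h2
  · refine ⟨P.f_up (by omega), ?_, P.f_a_conj i⟩
    rw [show (22 + i, 23 + i, 44 + i).2.1 = 22 + (i + 1) by simp; omega]
    exact P.f_up (by omega)
  · exact ⟨P.f_up (k := 0) (by omega), P.f_up (k := 18) (by omega), P.f_up (k := 19) (by omega)⟩
  · exact ⟨P.f_up (k := 17) (by omega), P.f_up (k := 20) (by omega), P.f_up (k := 21) (by omega)⟩

lemma up_cls {i : ℕ} (hi : i < 19) :
    (P.f (upT i).1 - P.f (upT i).2.1) ^ 6 = (starRingEnd ℂ) (P.kl i) ∧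
    (P.f (upT i).1 - P.f (upT i).2.2) ^ 6 = (starRingEnd ℂ) (P.kl i) ∧
    (P.f (upT i).2.1 - P.f (upT i).2.2) ^ 6 = (starRingEnd ℂ) (P.kl i) := by
  obtain ⟨a, b, c⟩ := P.up_eq i
  obtain ⟨h1, h2, h3⟩ := P.low_cls hi
  rw [a, b, c]
  simp only [← map_sub, ← map_pow, h1, h2, h3, and_self]

lemma ssep_low_lt {i j : ℕ} (hij : i < j) (hj : j < 19) (hk : P.kl i = P.kl j) :
    SSep (tr P.f (lowT i)) (tr P.f (lowT j)) := by
  have e1 := P.e_re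
  have e2 := P.e_im
  have m1 := P.m_re
  have m2 := P.m_im
  have hre := congrArg Complex.re hk
  have him := congrArg Complex.im hk
  rcases lt_or_ge j 17 with h | h
  · have hi : i < 17 := by omega
    have hpar : i + 1 < j := by
      by_contra hc
      obtain rfl : j = i + 1 := by omega
      simp only [kl, if_pos h, if_pos hi] at him
      split_ifs at him with a b b
      · omega
      · simp only [Complex.conj_im] at him; linarith
      · simp only [Complex.conj_im] at him; linarith
      · omega
    have hC := P.C_pos
    have h1 := P.cast_C hpar
    push_cast at h1
    refine ⟨1, 0, (i + 1) * P.C + P.C / 2, fun v hv => ?_, fun v hv => ?_⟩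
    · have := P.row hi hv; linarith
    · have := P.row h hv; linarith
  · rcases lt_or_ge i 17 with hi | hi
    · exfalso
      simp only [kl, if_pos hi, if_neg (not_lt.2 h)] at hre
      split_ifs at hre <;> simp only [Complex.conj_re] at hre <;> linarith
    · obtain rfl : i = 17 := by omega
      obtain rfl : j = 18 := by omega
      refine ⟨1, 0, 1, fun v hv => ?_, fun v hv => ?_⟩
      · have := (P.pt0 hv).1; linarith
      · have := (P.pt1 hv).1; have := P.C_gt; linarith

lemma ssep_low {i j : ℕ} (hij : i ≠ j) (hi : i < 19) (hj : j < 19) (hk : P.kl i = P.kl j) :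
    SSep (tr P.f (lowT i)) (tr P.f (lowT j)) := by
  rcases lt_or_gt_of_ne hij with h | h
  · exact P.ssep_low_lt h hj hk
  · exact (P.ssep_low_lt h hi hk.symm).symm

lemma ssep_up {i j : ℕ} (hij : i ≠ j) (hi : i < 19) (hj : j < 19) (hk : P.kl i = P.kl j) :
    SSep (tr P.f (upT i)) (tr P.f (upT j)) := by
  obtain ⟨α, β, r, h1, h2⟩ := P.ssep_low hij hi hj hk
  refine ⟨α, -β, r, fun v hv => ?_, fun v hv => ?_⟩
  · have := h1 _ (P.up_conj hv); simp at this; linarith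
  · have := h2 _ (P.up_conj hv); simp at this; linarith

lemma ssep_lu {i j : ℕ} (hk : P.kl i = (starRingEnd ℂ) (P.kl j)) :
    SSep (tr P.f (lowT i)) (tr P.f (upT j)) := by
  have e1 := P.e_re
  have e2 := P.e_im
  have m1 := P.m_re
  have m2 := P.m_im
  have hre := congrArg Complex.re hk
  have him := congrArg Complex.im hk
  rcases lt_or_ge j 17 with h | h
  · rcases lt_or_ge i 17 with hi | hi
    · have hne : i ≠ j := by
        rintro rfl
        simp only [kl, if_pos h] at him
        split_ifs at him <;> simp only [Complex.conj_im] at him <;> linarith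
      rcases lt_or_gt_of_ne hne with hij | hij
      · refine ⟨1, 1, (i + 1) * P.C, fun v hv => ?_, fun v hv => ?_⟩
        · have := P.row hi hv; linarith
        · have h1 := P.row h (P.up_conj hv)
          have h2 := P.cast_C hij
          simp only [Complex.conj_re, Complex.conj_im] at h1
          linarith
      · apply SSep.symm
        refine ⟨1, -1, (j + 1) * P.C, fun v hv => ?_, fun v hv => ?_⟩
        · have h1 := P.row h (P.up_conj hv)
          simp only [Complex.conj_re, Complex.conj_im] at h1
          linarith
        · have := P.row hi hv
          have h2 := P.cast_C hij
          linarith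
    · exfalso
      simp only [kl, if_pos h, if_neg (not_lt.2 hi)] at hre
      split_ifs at hre <;> simp only [Complex.conj_re] at hre <;> linarith
  · exfalso
    rcases lt_or_ge i 17 with hi | hi
    · simp only [kl, if_pos hi, if_neg (not_lt.2 h)] at hre
      split_ifs at hre <;> simp only [Complex.conj_re] at hre <;> linarith
    · simp only [kl, if_neg (not_lt.2 hi), if_neg (not_lt.2 h)] at him
      simp only [Complex.conj_im] at him
      linarith

lemma cls : ∀ τ ∈ T0, ∃ K : ℂ, (P.f τ.1 - P.f τ.2.1) ^ 6 = K ∧ (P.f τ.1 - P.f τ.2.2) ^ 6 = K ∧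
      (P.f τ.2.1 - P.f τ.2.2) ^ 6 = K ∧
      ∀ σ ∈ T0, τ ≠ σ → (P.f σ.1 - P.f σ.2.1) ^ 6 = K → SSep (tr P.f τ) (tr P.f σ) := by
  intro τ hτ
  obtain ⟨i, hi, rfl | rfl⟩ := mem_T0.1 hτ
  · obtain ⟨h1, h2, h3⟩ := P.low_cls hi
    refine ⟨_, h1, h2, h3, ?_⟩
    intro σ hσ hne hK
    obtain ⟨j, hj, rfl | rfl⟩ := mem_T0.1 hσ
    · rw [(P.low_cls hj).1] at hK
      exact P.ssep_low (fun h => hne (by rw [h])) hi hj hK.symm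
    · rw [(P.up_cls hj).1] at hK
      exact P.ssep_lu hK.symm
  · obtain ⟨h1, h2, h3⟩ := P.up_cls hi
    refine ⟨_, h1, h2, h3, ?_⟩
    intro σ hσ hne hK
    obtain ⟨j, hj, rfl | rfl⟩ := mem_T0.1 hσ
    · rw [(P.low_cls hj).1] at hK
      exact (P.ssep_lu hK).symm
    · rw [(P.up_cls hj).1] at hK
      exact P.ssep_up (fun h => hne (by rw [h])) hi hj ((starRingEnd ℂ).injective hK.symm)

lemma unit : ∀ p ∈ Ed, dist (P.f p.1) (P.f p.2) = 1 := by
  intro p hp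
  obtain ⟨τ, hτ, h⟩ := mem_Ed.1 hp
  have key : ∀ (z : ℂ) (i : ℕ), z ^ 6 = P.kl i ∨ z ^ 6 = (starRingEnd ℂ) (P.kl i) → ‖z‖ = 1 := by
    intro z i hz
    have : ‖z‖ ^ 6 = 1 := by
      rw [← norm_pow]
      rcases hz with hz | hz <;> rw [hz]
      · exact P.kl_norm i
      · rw [Complex.norm_conj]; exact P.kl_norm i
    exact (pow_eq_one_iff_of_nonneg (norm_nonneg z) (by norm_num)).1 this
  rw [dist_eq_norm]
  obtain ⟨i, hi, rfl | rfl⟩ := mem_T0.1 hτ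
  · obtain ⟨h1, h2, h3⟩ := P.low_cls hi
    rcases h with rfl | rfl | rfl
    · exact key _ i (Or.inl h1)
    · exact key _ i (Or.inl h2)
    · exact key _ i (Or.inl h3)
  · obtain ⟨h1, h2, h3⟩ := P.up_cls hi
    rcases h with rfl | rfl | rfl
    · exact key _ i (Or.inr h1)
    · exact key _ i (Or.inr h2)
    · exact key _ i (Or.inr h3)

end Params

end HarborthG1


namespace HarborthG1

open UnitDistGraph

namespace Params

variable (P : Params)

lemma deg2_low {k : ℕ} (h1 : 18 ≤ k) (h2 : k < 22) :
    (P.f k).im < -((P.w * P.C + P.S) / 2) := by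
  have h3 := P.wp_gt
  have h4 := P.S_lt
  have h5 := P.q_small
  have h6 := P.q_pos
  have h7 := P.S_pos
  obtain rfl | rfl | rfl | rfl : k = 18 ∨ k = 19 ∨ k = 20 ∨ k = 21 := by omega
  · rw [f18, Complex.add_im, bpt, dep0]; simp only; linarith
  · rw [f19, Complex.add_im, bpt, dep0]; simp only; linarith
  · rw [f20, Complex.add_im, bpt, dep17]; simp only; linarith
  · rw [f21, Complex.add_im, bpt, dep17]; simp only; linarith

lemma b_low {k : ℕ} (h : k < 18) : -((P.w * P.C + P.S) / 2) ≤ (P.f k).im := by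
  rw [P.f_b h, bpt]
  have := P.dep_le k
  simp only; linarith

lemma im_neg {k : ℕ} (h : k < 22) : (P.f k).im < 0 := by
  rcases lt_or_ge k 18 with h1 | h1
  · rw [P.f_b h1, bpt]
    have := P.dep_pos k
    simp only; linarith
  · have h2 := P.deg2_low h1 h
    have h3 := P.wC_gt
    have h4 := P.S_pos
    linarith

lemma re18 : 0 < (P.f 18).re ∧ (P.f 18).re < 1 := by
  have := P.p_big; have := P.p_le; have := P.wq_lt; have := P.wq_pos
  rw [f18, Complex.add_re, bpt]; simp only [Nat.cast_zero, zero_mul, zero_add]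
  constructor <;> linarith
lemma re19 : (P.f 19).re < 0 := by
  have := P.p_big; have := P.p_le; have := P.wq_lt; have := P.wq_pos
  rw [f19, Complex.add_re, bpt]; simp only [Nat.cast_zero, zero_mul, zero_add]
  linarith
lemma re21 : 1 < (P.f 21).re ∧ (P.f 21).re < (P.f 20).re := by
  have := P.p_big; have := P.p_le; have := P.wq_lt; have := P.wq_pos; have := P.C_gt
  rw [f21, f20, Complex.add_re, Complex.add_re, bpt]; simp only
  push_cast
  constructor <;> linarith

lemma low_inj {a b : ℕ} (ha : a < 22) (hb : b < 22) (h : P.f a = P.f b) : a = b := by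
  rcases lt_or_ge a 18 with h1 | h1 <;> rcases lt_or_ge b 18 with h2 | h2
  · rw [P.f_b h1, P.f_b h2] at h
    have hre := congrArg Complex.re h
    simp only [bpt] at hre
    exact_mod_cast mul_right_cancel₀ P.C_pos.ne' hre
  · have h3 := P.b_low h1
    have h4 := P.deg2_low h2 hb
    rw [h] at h3; linarith
  · have h3 := P.b_low h2
    have h4 := P.deg2_low h1 ha
    rw [h] at h4; linarith
  · have hre := congrArg Complex.re h
    obtain ⟨r1, r2⟩ := P.re18
    have r3 := P.re19
    obtain ⟨r4, r5⟩ := P.re21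
    obtain rfl | rfl | rfl | rfl : a = 18 ∨ a = 19 ∨ a = 20 ∨ a = 21 := by omega
    all_goals
      obtain rfl | rfl | rfl | rfl : b = 18 ∨ b = 19 ∨ b = 20 ∨ b = 21 := by omega
      all_goals first | rfl | (exfalso; linarith)

lemma apt_lt {a b : ℕ} (h : a < b) : (P.apt a).re < (P.apt b).re := by
  have h1 := P.cast_C h
  have h2 := P.off_lt a
  have h3 := P.off_pos b
  simp only [apt]; linarith

lemma apt_inj {a b : ℕ} (h : P.apt a = P.apt b) : a = b := by
  rcases lt_trichotomy a b with h1 | h1 | h1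
  · have := P.apt_lt h1; rw [h] at this; linarith
  · exact h1
  · have := P.apt_lt h1; rw [h] at this; linarith

lemma label {a : ℕ} (ha : a < 61) : a < 22 ∨ (∃ k < 22, a = 22 + k) ∨ ∃ k, a = 44 + k := by
  rcases lt_or_ge a 22 with h | h
  · exact Or.inl h
  · rcases lt_or_ge a 44 with h' | h'
    · exact Or.inr (Or.inl ⟨a - 22, by omega, by omega⟩)
    · exact Or.inr (Or.inr ⟨a - 44, by omega⟩)

lemma up_im {k : ℕ} (h : k < 22) : 0 < (P.f (22 + k)).im := by
  rw [P.f_up h, Complex.conj_im]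
  have := P.im_neg h
  linarith

lemma a_im (k : ℕ) : (P.f (44 + k)).im = 0 := by rw [f_a, apt]

lemma inj : ∀ a < 61, ∀ b < 61, P.f a = P.f b → a = b := by
  intro a ha b hb h
  have him := congrArg Complex.im h
  rcases label ha with h1 | ⟨k, hk, rfl⟩ | ⟨k, rfl⟩ <;>
    rcases label hb with h2 | ⟨l, hl, rfl⟩ | ⟨l, rfl⟩
  · exact P.low_inj h1 h2 h
  · have := P.im_neg h1; have := P.up_im hl; linarith
  · have := P.im_neg h1; have := P.a_im l; linarith
  · have := P.im_neg h2; have := P.up_im hk; linarith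
  · rw [P.f_up hk, P.f_up hl] at h
    rw [P.low_inj hk hl ((starRingEnd ℂ).injective h)]
  · have := P.up_im hk; have := P.a_im l; linarith
  · have := P.im_neg h2; have := P.a_im k; linarith
  · have := P.up_im hl; have := P.a_im k; linarith
  · rw [f_a, f_a] at h
    rw [P.apt_inj h]

/-- The degree-two vertices lie on the two lines through a real point `c`. -/
lemma on_line : ∃ c : ℝ, ∀ k, 18 ≤ k → k < 22 → ∃ t : ℝ, 0 < t ∧
    P.f k = (c : ℂ) + t * (starRingEnd ℂ) P.m := by
  have hq := P.q_pos
  have hp : 0 < P.p := by linarith [P.p_big]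
  have hC := P.C_pos
  have hn : 0 < (P.w * P.C - P.S) / 2 + (P.w * P.p - P.q) / 2 := by
    linarith [P.wC_gt, P.wp_gt, P.q_small]
  obtain ⟨r, hr⟩ : ∃ r : ℝ, r = ((P.w * P.C - P.S) / 2 + (P.w * P.p - P.q) / 2) / P.q := ⟨_, rfl⟩
  have hr0 : 0 < r := by rw [hr]; exact div_pos hn hq
  have hrq : r * P.q = (P.w * P.C - P.S) / 2 + (P.w * P.p - P.q) / 2 := by
    rw [hr]; field_simp
  obtain ⟨l, hl⟩ : ∃ l : ℝ, l = 17 * P.C / P.p := ⟨_, rfl⟩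
  have hl0 : 0 < l := by rw [hl]; positivity
  have hlp : l * P.p = 17 * P.C := by rw [hl]; field_simp
  have hlq : l * P.q = P.S := by
    have : l * P.q * P.p = P.S * P.p := by rw [P.rel]; linear_combination P.q * hlp
    exact mul_right_cancel₀ hp.ne' this
  refine ⟨-(P.p + P.w * P.q) / 2 - r * P.p, fun k h1 h2 => ?_⟩
  obtain rfl | rfl | rfl | rfl : k = 18 ∨ k = 19 ∨ k = 20 ∨ k = 21 := by omega
  · refine ⟨r + 1, by linarith, ?_⟩
    rw [f18]
    apply Complex.ext <;> simp only [bpt, dep0, m, Complex.add_re, Complex.add_im,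
      Complex.re_ofReal_mul, Complex.im_ofReal_mul, Complex.ofReal_re, Complex.ofReal_im,
      Complex.conj_re, Complex.conj_im]
    · push_cast; ring
    · linear_combination hrq
  · refine ⟨r, by linarith, ?_⟩
    rw [f19]
    apply Complex.ext <;> simp only [bpt, dep0, m, Complex.add_re, Complex.add_im,
      Complex.re_ofReal_mul, Complex.im_ofReal_mul, Complex.ofReal_re, Complex.ofReal_im,
      Complex.conj_re, Complex.conj_im]
    · push_cast; ring
    · linear_combination hrq
  · refine ⟨r + l + 1, by linarith, ?_⟩
    rw [f20]
    apply Complex.ext <;> simp only [bpt, dep17, m, Complex.add_re, Complex.add_im,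
      Complex.re_ofReal_mul, Complex.im_ofReal_mul, Complex.ofReal_re, Complex.ofReal_im,
      Complex.conj_re, Complex.conj_im]
    · push_cast; linear_combination -hlp
    · linear_combination hrq + hlq
  · refine ⟨r + l, by linarith, ?_⟩
    rw [f21]
    apply Complex.ext <;> simp only [bpt, dep17, m, Complex.add_re, Complex.add_im,
      Complex.re_ofReal_mul, Complex.im_ofReal_mul, Complex.ofReal_re, Complex.ofReal_im,
      Complex.conj_re, Complex.conj_im]
    · push_cast; linear_combination -hlp
    · linear_combination hrq + hlq

lemma not_both {c t s : ℝ} (ht : 0 < t)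
    (h : (c : ℂ) + t * (starRingEnd ℂ) P.m = c + s * P.m) : False := by
  have h' := add_left_cancel h
  have hp : 0 < P.p := by linarith [P.p_big]
  have hre := congrArg Complex.re h'
  have him := congrArg Complex.im h'
  simp only [m, Complex.re_ofReal_mul, Complex.im_ofReal_mul, Complex.conj_re,
    Complex.conj_im] at hre him
  have h1 : t = s := mul_right_cancel₀ hp.ne' hre
  have h2 := mul_pos ht P.q_pos
  rw [← h1] at him
  linarith

lemma m_ne : P.m ≠ 0 := by
  intro h
  have := P.m_norm
  rw [h, norm_zero] at this
  norm_num at this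

lemma two_iff {k : ℕ} (hk : k < 61) : isTwo k = true ↔
    ∃ j, 18 ≤ j ∧ j < 22 ∧ (k = j ∨ k = 22 + j) := by
  have : ∀ k < 61, isTwo k = true ↔ (18 ≤ k ∧ k < 22) ∨ (40 ≤ k ∧ k < 44) := by decide +kernel
  rw [this k hk]
  constructor
  · rintro (h | h)
    · exact ⟨k, by omega, by omega, Or.inl rfl⟩
    · exact ⟨k - 22, by omega, by omega, Or.inr (by omega)⟩
  · rintro ⟨j, h1, h2, h | h⟩ <;> omega

lemma main {θ : ℝ} (hθ : Complex.exp (θ * Complex.I) * (starRingEnd ℂ) P.m = P.m) :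
    ∃ G : UnitDistGraph, ∃ c d₁ d₂ : ℂ, d₁ ≠ 0 ∧ d₂ ≠ 0 ∧
      UnitDistGraph.line c d₁ ≠ UnitDistGraph.line c d₂ ∧
      G.NonOverlapping ∧ G.OnlyUnitTriangles ∧ G.NoAdditionalTriangles ∧
      G.triangleCount = 38 ∧
      (∀ v ∈ G.V, G.degree v = 2 ∨ G.degree v = 4) ∧
      (UnitDistGraph.rot c θ) '' UnitDistGraph.line c d₁ =
        UnitDistGraph.line c d₂ ∧
      (∀ v ∈ G.V, G.degree v = 2 →
        v ∈ UnitDistGraph.line c d₁ ∪ UnitDistGraph.line c d₂) ∧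
      (UnitDistGraph.rot c θ) ''
          {v : ℂ | v ∈ G.V ∧ G.degree v = 2 ∧ v ∈ UnitDistGraph.line c d₁} =
        {v : ℂ | v ∈ G.V ∧ G.degree v = 2 ∧ v ∈ UnitDistGraph.line c d₂} := by
  obtain ⟨c, hc⟩ := P.on_line
  have hrot : ∀ t : ℝ, UnitDistGraph.rot c θ ((c : ℂ) + t * (starRingEnd ℂ) P.m) = c + t * P.m := by
    intro t
    rw [UnitDistGraph.rot]
    linear_combination (t : ℂ) * hθ
  have hup : ∀ j, 18 ≤ j → j < 22 → ∀ t : ℝ, P.f j = (c : ℂ) + t * (starRingEnd ℂ) P.m →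
      P.f (22 + j) = (c : ℂ) + t * P.m := by
    intro j h1 h2 t ht
    rw [P.f_up h2, ht]
    simp
  have hdeg : ∀ j, 18 ≤ j → j < 22 → (mkG P.f P.unit).degree (P.f j) = 2 ∧
      (mkG P.f P.unit).degree (P.f (22 + j)) = 2 := by
    intro j h1 h2
    constructor
    · rw [deg_eq P.inj P.unit (by omega), if_pos ((two_iff (by omega)).2 ⟨j, h1, h2, Or.inl rfl⟩)]
    · rw [deg_eq P.inj P.unit (by omega), if_pos ((two_iff (by omega)).2 ⟨j, h1, h2, Or.inr rfl⟩)]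
  have hdeg' : ∀ v ∈ (mkG P.f P.unit).V, (mkG P.f P.unit).degree v = 2 →
      ∃ j, 18 ≤ j ∧ j < 22 ∧ (v = P.f j ∨ v = P.f (22 + j)) := by
    intro v hv h
    obtain ⟨k, hk, rfl⟩ := (mem_V P.unit).1 hv
    rw [deg_eq P.inj P.unit hk] at h
    have h2 : isTwo k = true := by
      by_contra hcon
      rw [if_neg hcon] at h
      omega
    obtain ⟨j, h1, h2, h3⟩ := (two_iff hk).1 h2
    exact ⟨j, h1, h2, h3.imp (congrArg P.f) (congrArg P.f)⟩
  refine ⟨mkG P.f P.unit, c, (starRingEnd ℂ) P.m, P.m, ?_, P.m_ne, ?_,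
    nonoverlap P.inj P.unit P.sep_all, only_unit P.inj P.unit, no_additional P.unit P.cls,
    tri_count P.inj P.unit, ?_, ?_, ?_, ?_⟩
  · exact (map_ne_zero _).2 P.m_ne
  · intro h
    have h1 : (c : ℂ) + (1 : ℝ) * (starRingEnd ℂ) P.m ∈ UnitDistGraph.line c P.m :=
      h ▸ ⟨1, rfl⟩
    obtain ⟨s, hs⟩ := h1
    exact P.not_both one_pos hs
  · intro v hv
    obtain ⟨k, hk, rfl⟩ := (mem_V P.unit).1 hv
    rw [deg_eq P.inj P.unit hk]
    split_ifs
    · exact Or.inl rfl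
    · exact Or.inr rfl
  · ext z
    constructor
    · rintro ⟨_, ⟨t, rfl⟩, rfl⟩
      exact ⟨t, hrot t⟩
    · rintro ⟨t, rfl⟩
      exact ⟨_, ⟨t, rfl⟩, hrot t⟩
  · intro v hv h
    obtain ⟨j, h1, h2, rfl | rfl⟩ := hdeg' v hv h
    · obtain ⟨t, -, ht⟩ := hc j h1 h2
      exact Or.inl ⟨t, ht⟩
    · obtain ⟨t, -, ht⟩ := hc j h1 h2
      exact Or.inr ⟨t, hup j h1 h2 t ht⟩
  · ext z
    constructor
    · rintro ⟨v, ⟨hv, hd, s, hs⟩, rfl⟩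
      obtain ⟨j, h1, h2, rfl | rfl⟩ := hdeg' v hv hd
      · obtain ⟨t, -, ht⟩ := hc j h1 h2
        have hr : UnitDistGraph.rot c θ (P.f j) = P.f (22 + j) := by
          rw [hup j h1 h2 t ht, ht, hrot]
        rw [hr]
        exact ⟨(mem_V P.unit).2 ⟨_, by omega, rfl⟩, (hdeg j h1 h2).2, t, hup j h1 h2 t ht⟩
      · exfalso
        obtain ⟨t, ht0, ht⟩ := hc j h1 h2
        rw [P.f_up h2] at hs
        have hs' := congrArg (starRingEnd ℂ) hs
        simp only [map_add, map_mul, Complex.conj_conj, Complex.conj_ofReal] at hs'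
        exact P.not_both ht0 (ht.symm.trans hs')
    · rintro ⟨hv, hd, s, hs⟩
      obtain ⟨j, h1, h2, rfl | rfl⟩ := hdeg' z hv hd
      · exfalso
        obtain ⟨t, ht0, ht⟩ := hc j h1 h2
        exact P.not_both ht0 (ht.symm.trans hs)
      · obtain ⟨t, -, ht⟩ := hc j h1 h2
        refine ⟨P.f j, ⟨(mem_V P.unit).2 ⟨_, by omega, rfl⟩, (hdeg j h1 h2).1, t, ht⟩, ?_⟩
        rw [hup j h1 h2 t ht, ht, hrot]

end Params

lemma exists_params : ∃ P : Params, P.p = Real.cos (Real.pi / 100) ∧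
    P.q = Real.sin (Real.pi / 100) := by
  have hπ1 := Real.pi_gt_d2
  have hπ2 := Real.pi_lt_d2
  have ha : Real.pi / 100 < 315 / 10000 := by linarith
  have hb : 314 / 10000 < Real.pi / 100 := by linarith
  generalize Real.pi / 100 = a at *
  have ha0 : 0 < a := by linarith
  have q1 : Real.sin a < a := Real.sin_lt ha0
  have q2 : a - a ^ 3 / 6 < Real.sin a := Real.sin_gt_sub_cube ha0
  have p1 : 1 - a ^ 2 / 2 ≤ Real.cos a := Real.one_sub_sq_div_two_le_cos
  have p2 : Real.cos a ≤ 1 := Real.cos_le_one a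
  have pq := Real.cos_sq_add_sin_sq a
  generalize Real.cos a = p at *
  generalize Real.sin a = q at *
  have a2 : a ^ 2 < 1 / 1000 := by nlinarith
  have a3 : a ^ 3 < 1 / 10000 := by nlinarith
  have p3 : 99 / 100 < p := by linarith
  have q3 : 31 / 1000 < q := by linarith
  have q4 : q < 315 / 10000 := by linarith
  have hN : 0 < p ^ 2 + 289 * q ^ 2 := by positivity
  obtain ⟨N, hNdef⟩ : ∃ N, N = Real.sqrt (p ^ 2 + 289 * q ^ 2) := ⟨_, rfl⟩
  have hN0 : 0 < N := by rw [hNdef]; exact Real.sqrt_pos.2 hN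
  have hN2 : N ^ 2 = p ^ 2 + 289 * q ^ 2 := by rw [hNdef]; exact Real.sq_sqrt hN.le
  have w2 : Real.sqrt 3 ^ 2 = 3 := Real.sq_sqrt (by norm_num)
  have w0 : 0 < Real.sqrt 3 := Real.sqrt_pos.2 (by norm_num)
  generalize Real.sqrt 3 = w at *
  have w1 : w < 174 / 100 := by nlinarith
  refine ⟨{ C := p / N, S := 17 * q / N, p := p, q := q, w := w, w_pos := w0, w_sq := w2,
            C_pos := by positivity, S_pos := by positivity, CS := ?_, pq := pq,
            q_pos := by linarith, rel := ?_, tight := ?_, half := ?_, p_big := p3,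
            q_small := by linarith }, rfl, rfl⟩
  · rw [div_pow, div_pow, ← add_div, div_eq_one_iff_eq (by positivity), hN2]; ring
  · field_simp
  · rw [← mul_div_assoc]
    apply div_lt_div_of_pos_right _ hN0
    nlinarith
  · rw [← mul_div_assoc]
    apply div_lt_div_of_pos_right _ hN0
    linarith

end HarborthG1


open Real in
/-- There exists a finite straight-line unit-distance graph
(not necessarily planar) with exactly 38 unit triangles with pairwise disjoint
interiors, in which every edge lies in a unit triangle, with no additional
triangles, all vertex degrees equal to 2 or 4, and two distinct lines `g₁`,
`g₂` through a common point `c`, meeting at the angle `2π/100 = 3.6°` (the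
rotation about `c` by `2π/100` maps `g₁` onto `g₂`), such that every degree-2
vertex lies on `g₁ ∪ g₂` and this rotation maps the set of degree-2 vertices on
`g₁` bijectively onto the set of degree-2 vertices on `g₂`. -/
theorem exists_subgraph_G1 :
    ∃ G : UnitDistGraph, ∃ c d₁ d₂ : ℂ, d₁ ≠ 0 ∧ d₂ ≠ 0 ∧
      UnitDistGraph.line c d₁ ≠ UnitDistGraph.line c d₂ ∧
      G.NonOverlapping ∧ G.OnlyUnitTriangles ∧ G.NoAdditionalTriangles ∧
      G.triangleCount = 38 ∧
      (∀ v ∈ G.V, G.degree v = 2 ∨ G.degree v = 4) ∧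
      (UnitDistGraph.rot c (2 * π / 100)) '' UnitDistGraph.line c d₁ =
        UnitDistGraph.line c d₂ ∧
      (∀ v ∈ G.V, G.degree v = 2 →
        v ∈ UnitDistGraph.line c d₁ ∪ UnitDistGraph.line c d₂) ∧
      (UnitDistGraph.rot c (2 * π / 100)) ''
          {v : ℂ | v ∈ G.V ∧ G.degree v = 2 ∧ v ∈ UnitDistGraph.line c d₁} =
        {v : ℂ | v ∈ G.V ∧ G.degree v = 2 ∧ v ∈ UnitDistGraph.line c d₂} := by
  obtain ⟨P, hp, hq⟩ := HarborthG1.exists_params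
  apply P.main
  have hm : P.m = Complex.exp ((π / 100 : ℝ) * Complex.I) := by
    apply Complex.ext
    · rw [Complex.exp_ofReal_mul_I_re]; exact hp
    · rw [Complex.exp_ofReal_mul_I_im]; exact hq
  rw [hm, ← Complex.exp_conj, ← Complex.exp_add]
  congr 1
  simp only [map_mul, Complex.conj_ofReal, Complex.conj_I]
  push_cast
  ring
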